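/- Fix K ∈ {2, 3} and let C_2 = 2/3, C_3 = 4/7. Let A ∈ ℝ^{m×n} have unit ℓ₂-norm columns and satisfy the RIP of order K+1 with constant δ < C_K. Let x ∈ ℝ^n be K-sparse with support S = supp(x), let S' be a proper subset of S with |S'| = k, set r = P_{S'}^⊥ A x, and let j ∈ {1,…,n} \ S. Then √(K−k) · ‖x_{S\S'}‖₂ · |⟨r, a_j⟩| / ‖P_{S'}^⊥ a_j‖₂ < ‖r‖₂². -/

import Mathlib

open Finset

noncomputable section

/-- The support of a vector as a `Finset`. -/
def vsupp {n : ℕ} (x : Fin n → ℝ) : Finset (Fin n) :=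
  Finset.univ.filter (fun i => x i ≠ 0)

/-- `A` satisfies the restricted isometry property of order `r` with constant `δ`. -/
def RIP {m n : ℕ} (A : Matrix (Fin m) (Fin n) ℝ) (r : ℕ) (δ : ℝ) : Prop :=
  ∀ x : Fin n → ℝ, (vsupp x).card ≤ r →
    (1 - δ) * (∑ i, x i ^ 2) ≤ (∑ i, (A.mulVec x) i ^ 2) ∧
      (∑ i, (A.mulVec x) i ^ 2) ≤ (1 + δ) * (∑ i, x i ^ 2)

/-- The `j`-th column of `A`. -/
def col {m n : ℕ} (A : Matrix (Fin m) (Fin n) ℝ) (j : Fin n) : Fin m → ℝ :=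
  fun i => A i j

/-- Euclidean dot product. -/
def dot {m : ℕ} (u v : Fin m → ℝ) : ℝ := ∑ i, u i * v i

/-- Squared Euclidean norm. -/
def nsq {m : ℕ} (v : Fin m → ℝ) : ℝ := ∑ i, v i ^ 2

/-- Euclidean norm. -/
def enorm {m : ℕ} (v : Fin m → ℝ) : ℝ := Real.sqrt (nsq v)

/-- Squared norm of the restriction of `x` to `T`. -/
def rsq {n : ℕ} (x : Fin n → ℝ) (T : Finset (Fin n)) : ℝ := ∑ i ∈ T, x i ^ 2

/-- Norm of the restriction of `x` to `T`. -/
def rnorm {n : ℕ} (x : Fin n → ℝ) (T : Finset (Fin n)) : ℝ := Real.sqrt (rsq x T)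

/-- Span of the columns of `A` indexed by `J`. -/
def colSpan {m n : ℕ} (A : Matrix (Fin m) (Fin n) ℝ) (J : Finset (Fin n)) :
    Submodule ℝ (EuclideanSpace ℝ (Fin m)) :=
  Submodule.span ℝ ((fun j => (WithLp.equiv 2 (Fin m → ℝ)).symm (col A j)) '' (J : Set (Fin n)))

/-- The projection `P_J^⊥ v` of `v` onto the orthogonal complement of the span of the
columns of `A` indexed by `J`. -/
def projPerp {m n : ℕ} (A : Matrix (Fin m) (Fin n) ℝ) (J : Finset (Fin n)) (v : Fin m → ℝ) :
    Fin m → ℝ :=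
  v - WithLp.equiv 2 (Fin m → ℝ)
    ((Submodule.orthogonalProjectionOnto (colSpan A J) ((WithLp.equiv 2 (Fin m → ℝ)).symm v) :
      EuclideanSpace ℝ (Fin m)))

/-- The OLS selection criterion value for index `j`, given measurements `y` and current
estimated support `Sk`. -/
def olsQuot {m n : ℕ} (A : Matrix (Fin m) (Fin n) ℝ) (y : Fin m → ℝ) (Sk : Finset (Fin n))
    (j : Fin n) : ℝ :=
  |dot (projPerp A Sk y) (col A j)| / _root_.enorm (projPerp A Sk (col A j))

/-- The estimated support of OLS after `k` iterations (ties broken towards smaller index). -/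
def olsSupp {m n : ℕ} (A : Matrix (Fin m) (Fin n) ℝ) (y : Fin m → ℝ) : ℕ → Finset (Fin n)
  | 0 => ∅
  | k + 1 =>
    let Sk := olsSupp A y k
    let cand := (Finset.univ \ Sk).filter
      (fun j => ∀ i ∈ Finset.univ \ Sk, olsQuot A y Sk i ≤ olsQuot A y Sk j)
    if h : cand.Nonempty then insert (cand.min' h) Sk else Sk

/-- The constant `C_K` from the paper. -/
def CK (K : ℕ) : ℝ :=
  if K = 1 then 1 else if K = 2 then 2/3 else if K = 3 then 4/7 else 1 / Real.sqrt K

/-!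
Projecting out the columns indexed by `S'` preserves the lower restricted isometry bound for the
coordinates outside `S'`. With `b = P_{S'}^⊥ a_j` and `X = ‖x_{S\S'}‖²`, applying this to
`x + s e_j` gives `(1 - δ)(X + s²) ≤ ‖r + s b‖²` for every real `s`, and the discriminant of this
quadratic in `s` yields `⟨r, b⟩² ≤ (‖r‖² - (1 - δ) X) (‖b‖² - (1 - δ))`. The second factor is at
most `δ ‖b‖²` because `‖b‖ ≤ 1`. With `L = K - k` it remains to see that
`L δ X (‖r‖² - (1 - δ) X) < ‖r‖⁴`, which holds because, as a quadratic form in `(‖r‖², X)`, the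
difference is positive as soon as `L δ < 4 (1 - δ)`. The last condition reads `δ < 4 / (4 + L)`,
and `C_K = 4 / (4 + K)` for `K ∈ {2, 3}`.
-/

section RealInequalities

variable {L δ X R B g : ℝ}

lemma mul_mul_sub_lt_sq {a c : ℝ} (ha : 0 ≤ a) (hac : a < 4 * c) (hX : X ≠ 0) (hR : R ≠ 0) :
    a * X * (R - c * X) < R ^ 2 := by
  have complete_square : 4 * (R ^ 2 - a * X * (R - c * X)) =
      (2 * R - a * X) ^ 2 + a * ((4 * c - a) * X ^ 2) := by ring
  have hcoeff : 0 < (4 * c - a) * X ^ 2 := mul_pos (sub_pos.2 hac) (by positivity)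
  suffices 0 < (2 * R - a * X) ^ 2 + a * ((4 * c - a) * X ^ 2) by linarith
  rcases ha.eq_or_lt with rfl | ha
  · rw [zero_mul, zero_mul, sub_zero, add_zero]
    positivity
  · positivity

lemma sqrt_mul_sqrt_mul_abs_div_sqrt_lt (hL : 0 ≤ L) (hδ : δ < 4 / (4 + L)) (hX : 0 < X)
    (hBδ : 1 - δ ≤ B) (hB : B ≤ 1) (hR : (1 - δ) * X ≤ R)
    (hg : g ^ 2 ≤ (R - (1 - δ) * X) * (B - (1 - δ))) :
    √L * √X * |g| / √B < R := by
  have hLδ : L * δ < 4 * (1 - δ) := by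
    rw [lt_div_iff₀ (by positivity)] at hδ
    linarith
  have hδ0 : 0 ≤ δ := by linarith
  have hδ1 : 0 < 1 - δ := by linarith [mul_nonneg hL hδ0]
  have hB0 : 0 < B := hδ1.trans_le hBδ
  have hR0 : 0 < R := (mul_pos hδ1 hX).trans_le hR
  have hBδ' : B - (1 - δ) ≤ δ * B := by
    linarith [mul_nonneg hδ1.le (sub_nonneg.2 hB)]
  rw [div_lt_iff₀ (Real.sqrt_pos.2 hB0)]
  apply lt_of_pow_lt_pow_left₀ 2 (by positivity)
  rw [mul_pow, mul_pow, mul_pow, Real.sq_sqrt hL, Real.sq_sqrt hX.le, Real.sq_sqrt hB0.le, sq_abs]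
  calc L * X * g ^ 2
      ≤ L * X * ((R - (1 - δ) * X) * (δ * B)) := by
        gcongr
        exact hg.trans (mul_le_mul_of_nonneg_left hBδ' (sub_nonneg.2 hR))
    _ = L * δ * X * (R - (1 - δ) * X) * B := by ring
    _ < R ^ 2 * B := by
        gcongr
        exact mul_mul_sub_lt_sq (mul_nonneg hL hδ0) hLδ hX.ne' hR0.ne'

end RealInequalities

lemma real_inner_sq_le_of_forall_le_norm_add_smul_sq {E : Type*} [NormedAddCommGroup E]
    [InnerProductSpace ℝ E] {u v : E} {a b : ℝ}
    (h : ∀ s : ℝ, a + b * s ^ 2 ≤ ‖u + s • v‖ ^ 2) :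
    inner ℝ u v ^ 2 ≤ (‖u‖ ^ 2 - a) * (‖v‖ ^ 2 - b) := by
  have quadratic_nonneg (s : ℝ) :
      0 ≤ (‖v‖ ^ 2 - b) * (s * s) + 2 * inner ℝ u v * s + (‖u‖ ^ 2 - a) := by
    have hs := h s
    rw [norm_add_sq_real, real_inner_smul_right, norm_smul, mul_pow, Real.norm_eq_abs, sq_abs] at hs
    linarith
  have hdiscrim := discrim_le_zero quadratic_nonneg
  rw [discrim] at hdiscrim
  linarith

section Euclidean

variable {m : ℕ}

lemma dot_eq_inner (u v : Fin m → ℝ) : dot u v = inner ℝ (WithLp.toLp 2 u) (WithLp.toLp 2 v) := by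
  simp [dot, PiLp.inner_apply, mul_comm]

lemma nsq_eq_norm_sq (u : Fin m → ℝ) : nsq u = ‖WithLp.toLp 2 u‖ ^ 2 := by
  simp [nsq, EuclideanSpace.norm_sq_eq]

lemma notMem_vsupp {x : Fin m → ℝ} {i : Fin m} : i ∉ vsupp x ↔ x i = 0 := by
  simp [vsupp]

lemma vsupp_subset_iff {x : Fin m → ℝ} {T : Finset (Fin m)} :
    vsupp x ⊆ T ↔ ∀ i ∉ T, x i = 0 := by
  simp only [← notMem_vsupp, not_imp_not, Finset.subset_iff]

lemma rsq_vsupp_sdiff (x : Fin m → ℝ) (J : Finset (Fin m)) :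
    rsq x (vsupp x \ J) = rsq x Jᶜ := by
  refine Finset.sum_subset (fun i hi ↦ by simp_all) fun i hiJ hi ↦ ?_
  have : x i = 0 := notMem_vsupp.1 fun hix ↦ hi (Finset.mem_sdiff.2 ⟨hix, Finset.mem_compl.1 hiJ⟩)
  simp [this]

lemma rsq_vsupp_sdiff_pos {x : Fin m → ℝ} {J : Finset (Fin m)} (h : ¬ vsupp x ⊆ J) :
    0 < rsq x (vsupp x \ J) := by
  refine Finset.sum_pos (fun i hi ↦ ?_) (Finset.sdiff_nonempty.2 h)
  have : x i ≠ 0 := fun hi0 ↦ notMem_vsupp.2 hi0 (Finset.mem_sdiff.1 hi).1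
  positivity

lemma rsq_add_smul_single {x : Fin m → ℝ} {T : Finset (Fin m)} {j : Fin m} (hx : x j = 0)
    (hj : j ∈ T) (s : ℝ) : rsq (x + s • Pi.single j 1) T = rsq x T + s ^ 2 := by
  have cross_zero (i : Fin m) :
      (x + s • (Pi.single j 1 : Fin m → ℝ)) i ^ 2 = x i ^ 2 + if i = j then s ^ 2 else 0 := by
    by_cases hij : i = j
    · subst hij
      simp [hx]
    · simp [hij]
  simp only [rsq, cross_zero, Finset.sum_add_distrib, Finset.sum_ite_eq', hj, if_true]

end Euclidean

section ProjPerp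

variable {m n : ℕ} (A : Matrix (Fin m) (Fin n) ℝ) (J : Finset (Fin n))

lemma mulVec_single_one_eq_col (j : Fin n) : A.mulVec (Pi.single j 1) = col A j :=
  A.mulVec_single_one j

lemma toLp_projPerp (v : Fin m → ℝ) :
    WithLp.toLp 2 (projPerp A J v) = (colSpan A J)ᗮ.starProjection (WithLp.toLp 2 v) := by
  rw [Submodule.starProjection_orthogonal_val]
  rfl

lemma projPerp_add_smul (u v : Fin m → ℝ) (s : ℝ) :
    projPerp A J (u + s • v) = projPerp A J u + s • projPerp A J v := by
  apply WithLp.toLp_injective 2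
  simp only [WithLp.toLp_add, WithLp.toLp_smul, toLp_projPerp, map_add, map_smul]

lemma dot_projPerp_projPerp (u v : Fin m → ℝ) :
    dot (projPerp A J u) (projPerp A J v) = dot (projPerp A J u) v := by
  simp only [dot_eq_inner, toLp_projPerp]
  rw [← Submodule.inner_starProjection_left_eq_right,
    Submodule.starProjection_eq_self_iff.2 (Submodule.starProjection_apply_mem _ _)]

lemma nsq_projPerp_le (v : Fin m → ℝ) : nsq (projPerp A J v) ≤ nsq v := by
  rw [nsq_eq_norm_sq, nsq_eq_norm_sq, toLp_projPerp]
  gcongr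
  exact Submodule.norm_starProjection_apply_le _ _

lemma exists_mulVec_eq_of_mem_colSpan {v : EuclideanSpace ℝ (Fin m)} (hv : v ∈ colSpan A J) :
    ∃ w : Fin n → ℝ, vsupp w ⊆ J ∧ A.mulVec w = v := by
  rw [colSpan, Finsupp.mem_span_image_iff_linearCombination] at hv
  obtain ⟨w, hwJ, rfl⟩ := hv
  refine ⟨w, vsupp_subset_iff.2 fun i hi ↦ (Finsupp.mem_supported' ℝ w).1 hwJ i hi, ?_⟩
  ext l
  simp [Finsupp.linearCombination_apply, Finsupp.sum_fintype, Matrix.mulVec,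
    dotProduct, col, mul_comm]

lemma exists_projPerp_eq_sub_mulVec (v : Fin m → ℝ) :
    ∃ w : Fin n → ℝ, vsupp w ⊆ J ∧ projPerp A J v = v - A.mulVec w := by
  obtain ⟨w, hwJ, hw⟩ := exists_mulVec_eq_of_mem_colSpan A J
    ((colSpan A J).orthogonalProjectionOnto (WithLp.toLp 2 v)).2
  exact ⟨w, hwJ, by rw [hw]; rfl⟩

end ProjPerp

section RIP

variable {m n : ℕ} {A : Matrix (Fin m) (Fin n) ℝ} {δ : ℝ} {J T : Finset (Fin n)}

lemma RIP.mul_rsq_compl_le_nsq_projPerp {r : ℕ} (hA : RIP A r δ) (hδ : δ ≤ 1) (hJT : J ⊆ T)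
    (hT : T.card ≤ r) {y : Fin n → ℝ} (hy : vsupp y ⊆ T) :
    (1 - δ) * rsq y Jᶜ ≤ nsq (projPerp A J (A.mulVec y)) := by
  obtain ⟨w, hwJ, hw⟩ := exists_projPerp_eq_sub_mulVec A J (A.mulVec y)
  rw [vsupp_subset_iff] at hwJ hy
  have hsupp : vsupp (y - w) ⊆ T := vsupp_subset_iff.2 fun i hi ↦ by
    simp [hy i hi, hwJ i fun hiJ ↦ hi (hJT hiJ)]
  have hle : rsq y Jᶜ ≤ ∑ i, (y - w) i ^ 2 :=
    calc rsq y Jᶜ = ∑ i ∈ Jᶜ, (y - w) i ^ 2 :=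
          Finset.sum_congr rfl fun i hi ↦ by simp [hwJ i (Finset.mem_compl.1 hi)]
      _ ≤ ∑ i, (y - w) i ^ 2 :=
          Finset.sum_le_univ_sum_of_nonneg fun _ ↦ sq_nonneg _
  calc (1 - δ) * rsq y Jᶜ ≤ (1 - δ) * ∑ i, (y - w) i ^ 2 :=
        mul_le_mul_of_nonneg_left hle (sub_nonneg.2 hδ)
    _ ≤ nsq (A.mulVec (y - w)) := (hA _ ((Finset.card_le_card hsupp).trans hT)).1
    _ = nsq (projPerp A J (A.mulVec y)) := by rw [hw, Matrix.mulVec_sub]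

lemma RIP.le_nsq_projPerp_col {r : ℕ} (hA : RIP A r δ) (hδ : δ ≤ 1) (hJ : J.card < r) {j : Fin n}
    (hj : j ∉ J) : 1 - δ ≤ nsq (projPerp A J (col A j)) := by
  have hsupp : vsupp (Pi.single j 1 : Fin n → ℝ) ⊆ insert j J :=
    vsupp_subset_iff.2 fun i hi ↦ by simp_all
  have hrsq : rsq (Pi.single j 1 : Fin n → ℝ) Jᶜ = 1 := by
    simpa [rsq] using rsq_add_smul_single (x := 0) rfl (Finset.mem_compl.2 hj) 1
  have hbound := hA.mul_rsq_compl_le_nsq_projPerp hδ (Finset.subset_insert j J)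
    ((Finset.card_insert_le j J).trans hJ) hsupp
  rwa [hrsq, mul_one, mulVec_single_one_eq_col] at hbound

lemma RIP.dot_projPerp_col_sq_le {r : ℕ} (hA : RIP A r δ) (hδ : δ ≤ 1) {x : Fin n → ℝ}
    (hJ : J ⊆ vsupp x) (hx : (vsupp x).card < r) {j : Fin n} (hj : j ∉ vsupp x) :
    dot (projPerp A J (A.mulVec x)) (col A j) ^ 2 ≤
      (nsq (projPerp A J (A.mulVec x)) - (1 - δ) * rsq x Jᶜ) *
        (nsq (projPerp A J (col A j)) - (1 - δ)) := by
  rw [← dot_projPerp_projPerp, dot_eq_inner, nsq_eq_norm_sq, nsq_eq_norm_sq]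
  refine real_inner_sq_le_of_forall_le_norm_add_smul_sq fun s ↦ ?_
  have hsupp : vsupp (x + s • Pi.single j 1) ⊆ insert j (vsupp x) :=
    vsupp_subset_iff.2 fun i hi ↦ by
      rw [Finset.mem_insert, not_or, notMem_vsupp] at hi
      simp [hi.1, hi.2]
  have hbound := hA.mul_rsq_compl_le_nsq_projPerp hδ (hJ.trans (Finset.subset_insert j _))
    ((Finset.card_insert_le j _).trans hx) hsupp
  rwa [rsq_add_smul_single (notMem_vsupp.1 hj) (Finset.mem_compl.2 fun hjJ ↦ hj (hJ hjJ)),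
    mul_add, Matrix.mulVec_add, Matrix.mulVec_smul, mulVec_single_one_eq_col, projPerp_add_smul,
    nsq_eq_norm_sq, WithLp.toLp_add, WithLp.toLp_smul] at hbound

theorem stmt10_general {K : ℕ} {x : Fin n → ℝ} {S' : Finset (Fin n)} {j : Fin n}
    (hδ : δ < 4 / (4 + ((K : ℝ) - S'.card))) (hcol : nsq (col A j) ≤ 1) (hRIP : RIP A (K + 1) δ)
    (hK : (vsupp x).card ≤ K) (hS' : S' ⊂ vsupp x) (hj : j ∉ vsupp x) :
    √((K : ℝ) - S'.card) * rnorm x (vsupp x \ S') *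
        |dot (projPerp A S' (A.mulVec x)) (col A j)| / _root_.enorm (projPerp A S' (col A j)) <
      nsq (projPerp A S' (A.mulVec x)) := by
  have hS'K : S'.card < K := (Finset.card_lt_card hS').trans_le hK
  have hL : (0 : ℝ) ≤ K - S'.card := sub_nonneg.2 (by exact_mod_cast hS'K.le)
  have hδ1 : δ ≤ 1 := hδ.le.trans (div_le_one_of_le₀ (by linarith) (by linarith))
  have hX : 0 < rsq x (vsupp x \ S') := rsq_vsupp_sdiff_pos hS'.not_subset
  refine sqrt_mul_sqrt_mul_abs_div_sqrt_lt hL hδ hX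
    (hRIP.le_nsq_projPerp_col hδ1 (Nat.lt_succ_of_lt hS'K) fun hjS' ↦ hj (hS'.subset hjS'))
    ((nsq_projPerp_le A S' _).trans hcol) ?_ ?_ <;> rw [rsq_vsupp_sdiff]
  · exact hRIP.mul_rsq_compl_le_nsq_projPerp hδ1 hS'.subset (hK.trans K.le_succ) subset_rfl
  · exact hRIP.dot_projPerp_col_sq_le hδ1 hS'.subset (Nat.lt_succ_of_le hK) hj

end RIP

lemma CK_le_four_div {K : ℕ} (hK : K = 2 ∨ K = 3) {k : ℕ} (hk : k ≤ K) :
    CK K ≤ 4 / (4 + ((K : ℝ) - k)) := by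
  have hkK : (k : ℝ) ≤ K := by exact_mod_cast hk
  calc CK K = 4 / (4 + (K : ℝ)) := by rcases hK with rfl | rfl <;> norm_num [CK]
    _ ≤ 4 / (4 + ((K : ℝ) - k)) :=
      div_le_div_of_nonneg_left (by norm_num) (by linarith)
        (add_le_add_right (sub_le_self _ k.cast_nonneg) 4)

/-- for `K ∈ {2,3}`, unit-norm columns and RIP of order `K+1` with
`δ < C_K` (`C_2 = 2/3`, `C_3 = 4/7`), for `j ∉ S`,
`√(K−k) ‖x_{S\S'}‖₂ |⟨r, a_j⟩| / ‖P_{S'}^⊥ a_j‖₂ < ‖r‖₂²` where `k = |S'|`. -/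
theorem stmt10 {m n : ℕ} (K : ℕ) (hK : K = 2 ∨ K = 3) (A : Matrix (Fin m) (Fin n) ℝ) (δ : ℝ)
    (hδ0 : 0 ≤ δ) (hδ : δ < CK K)
    (hcols : ∀ j, nsq (col A j) = 1)
    (hRIP : RIP A (K + 1) δ)
    (x : Fin n → ℝ) (S : Finset (Fin n)) (hS : vsupp x = S) (hKs : S.card ≤ K)
    (S' : Finset (Fin n)) (hS' : S' ⊂ S) (k : ℕ) (hk : S'.card = k)
    (r : Fin m → ℝ) (hr : r = projPerp A S' (A.mulVec x))
    (j : Fin n) (hj : j ∉ S) :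
    Real.sqrt ((K : ℝ) - (k : ℝ)) * rnorm x (S \ S') * |dot r (col A j)| /
      _root_.enorm (projPerp A S' (col A j)) < nsq r := by
  subst hS hk hr
  have hS'K : S'.card ≤ K := (Finset.card_le_card hS'.subset).trans hKs
  exact stmt10_general (hδ.trans_le (CK_le_four_div hK hS'K)) (hcols j).le hRIP hKs hS' hj
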